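/- Let $C$ be an $[n,k,d]$ linear code with two-level hierarchical locality with parameters $[(r_1,\delta_1),(r_2,\delta_2)]$: for every coordinate $i$ there is a punctured code $C_i$ containing $i$ in its support with $\dim(C_i) \leq r_1$, $d_{\min}(C_i) \geq \delta_1$, and $C_i$ itself has $(r_2,\delta_2)$-locality. Then $d \leq n - k + 1 - (\lceil k/r_2 \rceil - 1)(\delta_2 - 1) - (\lceil k/r_1 \rceil - 1)(\delta_1 - \delta_2)$. -/

import Mathlib

open Finset

variable (F : Type*) [Field F] [DecidableEq F] (n : ℕ)

/-- The linear map restricting a word of length `n` to the coordinates in `S`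
(setting the remaining coordinates to zero). -/
def puncProj (S : Finset (Fin n)) : (Fin n → F) →ₗ[F] (Fin n → F) where
  toFun c := fun j => if j ∈ S then c j else 0
  map_add' x y := by funext j; by_cases h : j ∈ S <;> simp [h]
  map_smul' a x := by funext j; by_cases h : j ∈ S <;> simp [h]

/-- The punctured code of `C` obtained by restricting to the coordinate set `S`. -/
def puncture (C : Submodule F (Fin n → F)) (S : Finset (Fin n)) :
    Submodule F (Fin n → F) :=
  C.map (puncProj F n S)

/-- `C` has all-symbol `(r,δ)`-locality: every coordinate in the support of `C`
lies in the support of a punctured code of dimension at most `r` and minimum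
distance at least `δ`. -/
def HasLocality (C : Submodule F (Fin n → F)) (r δ : ℕ) : Prop :=
  ∀ i : Fin n, (∃ c ∈ C, c i ≠ 0) →
    ∃ S : Finset (Fin n),
      (∃ c ∈ puncture F n C S, c i ≠ 0) ∧
      Module.finrank F ↥(puncture F n C S) ≤ r ∧
      ∀ c ∈ puncture F n C S, c ≠ 0 → δ ≤ hammingNorm c

/-- `d` is the minimum Hamming distance of the linear code `C`. -/
def IsMinDist (C : Submodule F (Fin n → F)) (d : ℕ) : Prop :=
  (∃ c ∈ C, c ≠ 0 ∧ hammingNorm c = d) ∧ ∀ c ∈ C, c ≠ 0 → d ≤ hammingNorm c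

/-- `C` has two-level hierarchical locality with parameters `[(r₁,δ₁),(r₂,δ₂)]`. -/
def HasHierLocality2 (C : Submodule F (Fin n → F)) (r₁ δ₁ r₂ δ₂ : ℕ) : Prop :=
  ∀ i : Fin n, (∃ c ∈ C, c i ≠ 0) →
    ∃ S : Finset (Fin n),
      (∃ c ∈ puncture F n C S, c i ≠ 0) ∧
      Module.finrank F ↥(puncture F n C S) ≤ r₁ ∧
      (∀ c ∈ puncture F n C S, c ≠ 0 → δ₁ ≤ hammingNorm c) ∧
      HasLocality F n (puncture F n C S) r₂ δ₂

/-! Greedily enlarge a set `T` of coordinates by local sets, as long as some nonzero codeword of `C`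
vanishes on `T`. A punctured code `C|_S` of minimum distance `δ` that is not yet determined by `T`
raises the nullity `#T - dim C|_T` by at least `δ - 1` when `S` is added: this is the Singleton
bound for the words of `C` that vanish on `T`, restricted to `S \ T`. Inside a set of the first
level one adds sets of the second level, each of gain `δ₂ - 1`, but replaces the last of them by the
whole first-level set, which gains `δ₁ - 1` instead. The dimension left drops by at most `r₂` per
set of the second level and by at most `r₁` per set of the first, so at least `⌈k / r₂⌉` of the
former and `⌈k / r₁⌉` of the latter are needed. Stopping just before the last one and applying the
Singleton bound to the codewords that vanish on the set reached gives the estimate.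
-/

section

variable {n}

lemma ceil_div_sub_one_mul_le {α : Type*} [Field α] [LinearOrder α] [IsStrictOrderedRing α]
    [FloorRing α] {k r m y : ℕ} {x : ℤ} (hk : 0 < k) (hkr : k ≤ (m + 1) * r) (hxy : x ≤ y) :
    (⌈(k : α) / r⌉ - 1) * x ≤ m * y := by
  have hr : 0 < r := Nat.pos_of_ne_zero fun h => by simp [h] at hkr; omega
  have hceil_pos : 1 ≤ ⌈(k : α) / r⌉ := Int.one_le_ceil_iff.2 (by positivity)
  have hceil_le : ⌈(k : α) / r⌉ ≤ m + 1 := by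
    rw [Int.ceil_le]
    exact div_le_of_le_mul₀ (by positivity) (by positivity) (mod_cast hkr)
  calc (⌈(k : α) / r⌉ - 1) * x ≤ (⌈(k : α) / r⌉ - 1) * y :=
        mul_le_mul_of_nonneg_left hxy (by omega)
    _ ≤ m * y := mul_le_mul_of_nonneg_right (by omega) (by positivity)

lemma finrank_map_add_finrank_inf_ker {K V V₂ : Type*} [DivisionRing K] [AddCommGroup V]
    [Module K V] [AddCommGroup V₂] [Module K V₂] (W : Submodule K V) [FiniteDimensional K W]
    (f : V →ₗ[K] V₂) :
    Module.finrank K (W.map f) + Module.finrank K ↥(W ⊓ LinearMap.ker f) = Module.finrank K W := by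
  rw [← LinearMap.finrank_range_add_finrank_ker (f.domRestrict W), LinearMap.range_domRestrict,
    LinearMap.ker_domRestrict, ← Submodule.map_comap_subtype, Submodule.finrank_map_subtype_eq]

section Singleton

variable {ι R : Type*} [Ring R] [StrongRankCondition R] {D : Submodule R (ι → R)}

lemma finrank_le_card_of_forall_eq_zero {V : Finset ι}
    (hV : ∀ c ∈ D, (∀ i ∈ V, c i = 0) → c = 0) : Module.finrank R D ≤ #V := by
  let restrict : D →ₗ[R] V → R := (LinearMap.funLeft R R ((↑) : V → ι)).domRestrict D
  have restrict_injective : Function.Injective restrict := by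
    rw [injective_iff_map_eq_zero]
    intro c hc
    exact Subtype.ext (hV c c.2 fun i hi => congrFun hc ⟨i, hi⟩)
  simpa using LinearMap.finrank_le_finrank_of_injective restrict_injective

lemma finrank_add_sub_one_le_card [Fintype ι] [DecidableEq R] {U : Finset ι} {d : ℕ} (hD : D ≠ ⊥)
    (hd : ∀ c ∈ D, c ≠ 0 → d ≤ hammingNorm c) (hU : ∀ c ∈ D, ∀ i, c i ≠ 0 → i ∈ U) :
    Module.finrank R D + (d - 1) ≤ #U := by
  classical
  have hdU : d ≤ #U := by
    obtain ⟨c, hc, hc0⟩ := Submodule.exists_mem_ne_zero_of_ne_bot hD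
    exact (hd c hc hc0).trans (card_le_card fun i hi => hU c hc i (mem_filter.1 hi).2)
  obtain ⟨B, hBU, hB⟩ := exists_subset_card_eq (show d - 1 ≤ #U by omega)
  have hrank : Module.finrank R D ≤ #(U \ B) := by
    refine finrank_le_card_of_forall_eq_zero fun c hc hcU => ?_
    by_contra hc0
    have hcB : hammingNorm c ≤ #B := card_le_card fun i hi => by
      have hci := (mem_filter.1 hi).2
      by_contra hiB
      exact hci (hcU i (mem_sdiff.2 ⟨hU c hc i hci, hiB⟩))
    have := hd c hc hc0
    have := hammingNorm_pos_iff.2 hc0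
    omega
  rw [card_sdiff_of_subset hBU] at hrank
  omega

end Singleton

variable {K : Type*} [Field K] {C : Submodule K (Fin n → K)} {S T : Finset (Fin n)}

@[simp]
lemma puncProj_apply (S : Finset (Fin n)) (c : Fin n → K) (i : Fin n) :
    puncProj K n S c i = if i ∈ S then c i else 0 := rfl

lemma puncProj_eq_zero_iff {c : Fin n → K} : puncProj K n S c = 0 ↔ ∀ i ∈ S, c i = 0 := by
  simp [funext_iff]

lemma puncture_puncture (C : Submodule K (Fin n → K)) (S T : Finset (Fin n)) :
    puncture K n (puncture K n C S) T = puncture K n C (S ∩ T) := by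
  have hcomp : puncProj K n T ∘ₗ puncProj K n S = puncProj K n (S ∩ T) := by
    ext c i
    simp [← ite_and, and_comm]
  rw [puncture, puncture, ← Submodule.map_comp, hcomp, puncture]

lemma mem_of_mem_puncture {c : Fin n → K} {i : Fin n} (hc : c ∈ puncture K n C S) (hci : c i ≠ 0) :
    i ∈ S := by
  obtain ⟨x, -, rfl⟩ := hc
  by_contra hi
  simp [hi] at hci

lemma hammingNorm_puncProj_le [DecidableEq K] (S : Finset (Fin n)) (c : Fin n → K) :
    hammingNorm (puncProj K n S c) ≤ hammingNorm c :=
  card_le_card (monotone_filter_right _ fun i _ => by simp)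

/-- The subcode of the words of `C` vanishing on `T`, i.e. `C` shortened at `T`; the coordinates in
`T` are kept, as they are by `puncture`. -/
def shorten (C : Submodule K (Fin n → K)) (T : Finset (Fin n)) : Submodule K (Fin n → K) :=
  C ⊓ LinearMap.ker (puncProj K n T)

lemma mem_shorten {c : Fin n → K} : c ∈ shorten C T ↔ c ∈ C ∧ ∀ i ∈ T, c i = 0 := by
  rw [shorten, Submodule.mem_inf, LinearMap.mem_ker, puncProj_eq_zero_iff]

lemma shorten_le : shorten C T ≤ C := inf_le_left

lemma shorten_empty : shorten C ∅ = C := by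
  ext c
  simp [mem_shorten]

lemma shorten_union : shorten C (T ∪ S) = shorten C T ⊓ shorten C S := by
  ext c
  simp only [mem_shorten, Submodule.mem_inf, forall_mem_union]
  tauto

lemma not_shorten_le_shorten_iff :
    ¬ shorten C T ≤ shorten C S ↔ ∃ c ∈ shorten C T, ∃ i ∈ S, c i ≠ 0 := by
  simp only [SetLike.not_le_iff_exists, mem_shorten]
  grind

lemma ssubset_union_of_not_shorten_le (h : ¬ shorten C T ≤ shorten C S) : T ⊂ T ∪ S := by
  refine subset_union_left.ssubset_of_ne fun hTS => h ?_
  rw [hTS, shorten_union]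
  exact inf_le_right

lemma finrank_puncture_shorten_add_finrank_shorten_union (C : Submodule K (Fin n → K))
    (T S : Finset (Fin n)) :
    Module.finrank K (puncture K n (shorten C T) S) + Module.finrank K (shorten C (T ∪ S)) =
      Module.finrank K (shorten C T) := by
  have hinf : shorten C (T ∪ S) = shorten C T ⊓ LinearMap.ker (puncProj K n S) := by
    rw [shorten_union, shorten, shorten, inf_inf_inf_comm, inf_idem, inf_assoc]
  rw [hinf]
  exact finrank_map_add_finrank_inf_ker (shorten C T) (puncProj K n S)

lemma finrank_shorten_le_finrank_shorten_union_add {r : ℕ}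
    (hr : Module.finrank K (puncture K n C S) ≤ r) :
    Module.finrank K (shorten C T) ≤ Module.finrank K (shorten C (T ∪ S)) + r := by
  have hmono : Module.finrank K (puncture K n (shorten C T) S) ≤
      Module.finrank K (puncture K n C S) :=
    Submodule.finrank_mono (Submodule.map_mono shorten_le)
  have := finrank_puncture_shorten_add_finrank_shorten_union C T S
  omega

/-- The nullity `#T - dim C|_T` of `T` in the matroid of the code `C`, shifted by `dim C` to avoid
subtraction: the words of `C` vanishing on `T` form a space of dimension `dim C - dim C|_T`. -/
noncomputable def shiftedNullity (C : Submodule K (Fin n → K)) (T : Finset (Fin n)) : ℕ :=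
  #T + Module.finrank K (shorten C T)

lemma shiftedNullity_empty : shiftedNullity C ∅ = Module.finrank K C := by
  rw [shiftedNullity, shorten_empty, card_empty, zero_add]

variable [DecidableEq K]

lemma shiftedNullity_add_le_shiftedNullity_union {δ : ℕ}
    (hδ : ∀ c ∈ puncture K n C S, c ≠ 0 → δ ≤ hammingNorm c)
    (hT : ¬ shorten C T ≤ shorten C S) :
    shiftedNullity C T + (δ - 1) ≤ shiftedNullity C (T ∪ S) := by
  have hne : puncture K n (shorten C T) S ≠ ⊥ := by
    obtain ⟨c, hc, i, hi, hci⟩ := not_shorten_le_shorten_iff.1 hT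
    refine (Submodule.ne_bot_iff _).2 ⟨_, Submodule.mem_map_of_mem hc, fun h => ?_⟩
    exact hci (puncProj_eq_zero_iff.1 h i hi)
  have hsupp : ∀ c ∈ puncture K n (shorten C T) S, ∀ i, c i ≠ 0 → i ∈ S \ T := by
    intro c hc i hci
    refine mem_sdiff.2 ⟨mem_of_mem_puncture hc hci, fun hiT => hci ?_⟩
    obtain ⟨x, hx, rfl⟩ := hc
    simp [(mem_shorten.1 hx).2 i hiT]
  have hsingleton := finrank_add_sub_one_le_card hne
    (fun c hc => hδ c (Submodule.map_mono shorten_le hc)) hsupp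
  have hrank := finrank_puncture_shorten_add_finrank_shorten_union C T S
  have hcard := card_sdiff_add_card S T
  rw [union_comm] at hcard
  unfold shiftedNullity
  omega

lemma shiftedNullity_add_le_length_add_one {d : ℕ} (hd : ∀ c ∈ C, c ≠ 0 → d ≤ hammingNorm c)
    (hT : shorten C T ≠ ⊥) : shiftedNullity C T + d ≤ n + 1 := by
  have hsingleton := finrank_add_sub_one_le_card (U := Tᶜ) hT
    (fun c hc => hd c (shorten_le hc))
    (fun c hc i hci => mem_compl.2 fun hiT => hci ((mem_shorten.1 hc).2 i hiT))
  have hcard := card_add_card_compl T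
  rw [Fintype.card_fin] at hcard
  unfold shiftedNullity
  omega

lemma HasLocality.le_hammingNorm {r δ : ℕ} (hloc : HasLocality K n C r δ) {c : Fin n → K}
    (hc : c ∈ C) (hc0 : c ≠ 0) : δ ≤ hammingNorm c := by
  obtain ⟨i, hci⟩ := Function.ne_iff.1 hc0
  obtain ⟨B, ⟨x, hx, hxi⟩, -, hδ⟩ := hloc i ⟨c, hc, hci⟩
  refine (hδ _ (Submodule.mem_map_of_mem hc) fun h => ?_).trans (hammingNorm_puncProj_le B c)
  exact hci (puncProj_eq_zero_iff.1 h i (mem_of_mem_puncture hx hxi))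

lemma HasLocality.exists_local_set {r δ : ℕ} (hloc : HasLocality K n (puncture K n C S) r δ)
    (hT : ¬ shorten C T ≤ shorten C S) :
    ∃ B ⊆ S, ¬ shorten C T ≤ shorten C B ∧ Module.finrank K (puncture K n C B) ≤ r ∧
      ∀ c ∈ puncture K n C B, c ≠ 0 → δ ≤ hammingNorm c := by
  obtain ⟨c, hc, i, hi, hci⟩ := not_shorten_le_shorten_iff.1 hT
  obtain ⟨B, ⟨x, hx, hxi⟩, hr, hδ⟩ :=
    hloc i ⟨_, Submodule.mem_map_of_mem (shorten_le hc), by simpa [hi] using hci⟩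
  rw [puncture_puncture] at hx hr hδ
  have hiB := mem_of_mem_puncture hx hxi
  exact ⟨S ∩ B, inter_subset_left, not_shorten_le_shorten_iff.2 ⟨c, hc, i, hiB, hci⟩, hr, hδ⟩

lemma HasLocality.exists_greedy_set {r δ : ℕ} (hloc : HasLocality K n (puncture K n C S) r δ)
    (hT : ¬ shorten C T ≤ shorten C S) :
    ∃ (m : ℕ) (T' : Finset (Fin n)), T' ∪ S = T ∪ S ∧ ¬ shorten C T' ≤ shorten C S ∧
      shiftedNullity C T + m * (δ - 1) ≤ shiftedNullity C T' ∧
      Module.finrank K (shorten C T) ≤ Module.finrank K (shorten C (T ∪ S)) + (m + 1) * r := by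
  induction T using WellFoundedGT.induction with
  | ind T ih =>
    obtain ⟨B, hBS, hTB, hr, hδ⟩ := hloc.exists_local_set hT
    have hrank := finrank_shorten_le_finrank_shorten_union_add (T := T) hr
    by_cases hlast : shorten C (T ∪ B) ≤ shorten C S
    · have hTS : shorten C (T ∪ B) ≤ shorten C (T ∪ S) := by
        rw [shorten_union (S := S)]
        exact le_inf (shorten_union.trans_le inf_le_left) hlast
      have := Submodule.finrank_mono hTS
      exact ⟨0, T, rfl, hT, by omega, by omega⟩
    · have hunion : T ∪ B ∪ S = T ∪ S := by rw [union_assoc, union_eq_right.2 hBS]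
      obtain ⟨m, T', hT'S, hT', hgain, hdim⟩ := ih _ (ssubset_union_of_not_shorten_le hTB) hlast
      rw [hunion] at hT'S hdim
      have hgainB := shiftedNullity_add_le_shiftedNullity_union hδ hTB
      exact ⟨m + 1, T', hT'S, hT', by linarith, by linarith⟩

lemma HasHierLocality2.exists_local_set {r₁ δ₁ r₂ δ₂ : ℕ}
    (hloc : HasHierLocality2 K n C r₁ δ₁ r₂ δ₂) (hT : shorten C T ≠ ⊥) :
    ∃ S, ¬ shorten C T ≤ shorten C S ∧ Module.finrank K (puncture K n C S) ≤ r₁ ∧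
      (∀ c ∈ puncture K n C S, c ≠ 0 → max δ₁ δ₂ ≤ hammingNorm c) ∧
      HasLocality K n (puncture K n C S) r₂ δ₂ := by
  obtain ⟨c, hc, hc0⟩ := Submodule.exists_mem_ne_zero_of_ne_bot hT
  obtain ⟨i, hci⟩ := Function.ne_iff.1 hc0
  obtain ⟨S, ⟨x, hx, hxi⟩, hr, hδ, hlocS⟩ := hloc i ⟨c, shorten_le hc, hci⟩
  have hiS := mem_of_mem_puncture hx hxi
  exact ⟨S, not_shorten_le_shorten_iff.2 ⟨c, hc, i, hiS, hci⟩, hr,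
    fun c hc hc0 => max_le (hδ c hc hc0) (hlocS.le_hammingNorm hc hc0), hlocS⟩

lemma HasHierLocality2.exists_greedy_set {r₁ δ₁ r₂ δ₂ : ℕ} (hδ₂ : 1 ≤ δ₂)
    (hloc : HasHierLocality2 K n C r₁ δ₁ r₂ δ₂) (hT : shorten C T ≠ ⊥) :
    ∃ (a b : ℕ) (T' : Finset (Fin n)), shorten C T' ≠ ⊥ ∧
      shiftedNullity C T + a * (δ₂ - 1) + b * (δ₁ - δ₂) ≤ shiftedNullity C T' ∧
      Module.finrank K (shorten C T) ≤ (a + 1) * r₂ ∧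
      Module.finrank K (shorten C T) ≤ (b + 1) * r₁ := by
  induction T using WellFoundedGT.induction with
  | ind T ih =>
    obtain ⟨S, hTS, hr, hδ, hlocS⟩ := hloc.exists_local_set hT
    have hrank := finrank_shorten_le_finrank_shorten_union_add (T := T) hr
    obtain ⟨m, T₁, hT₁S, hT₁, hgainT₁, hdimS⟩ := hlocS.exists_greedy_set hTS
    by_cases hlast : shorten C (T ∪ S) = ⊥
    · rw [hlast, finrank_bot] at hrank hdimS
      exact ⟨m, 0, T₁, fun h => hT₁ (h ▸ bot_le), by omega, by omega, by omega⟩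
    · obtain ⟨a, b, T', hT', hgain, hdim₂, hdim₁⟩ :=
        ih _ (ssubset_union_of_not_shorten_le hTS) hlast
      have hgainS := shiftedNullity_add_le_shiftedNullity_union hδ hT₁
      have hmax : max δ₁ δ₂ - 1 = (δ₂ - 1) + (δ₁ - δ₂) := by omega
      rw [hT₁S, hmax] at hgainS
      exact ⟨a + (m + 1), b + 1, T', hT', by linarith, by linarith, by linarith⟩

theorem minDist_le_of_hierLocality2_general {k d r₁ δ₁ r₂ δ₂ : ℕ}
    (hk : Module.finrank K C = k) (hδ₂ : 1 ≤ δ₂)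
    (hd : IsMinDist K n C d) (hloc : HasHierLocality2 K n C r₁ δ₁ r₂ δ₂) :
    (d : ℤ) ≤ (n : ℤ) - k + 1 - (⌈(k : ℚ) / r₂⌉ - 1) * ((δ₂ : ℤ) - 1)
      - (⌈(k : ℚ) / r₁⌉ - 1) * ((δ₁ : ℤ) - (δ₂ : ℤ)) := by
  obtain ⟨⟨c, hc, hc0, -⟩, hd⟩ := hd
  have hC : C ≠ ⊥ := (Submodule.ne_bot_iff _).2 ⟨c, hc, hc0⟩
  have hkpos : 0 < k := hk ▸ Submodule.one_le_finrank_iff.2 hC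
  obtain ⟨a, b, T, hT, hgain, hdim₂, hdim₁⟩ :=
    hloc.exists_greedy_set hδ₂ (T := ∅) (shorten_empty.trans_ne hC)
  rw [shorten_empty, hk] at hdim₁ hdim₂
  rw [shiftedNullity_empty, hk] at hgain
  have hlength := shiftedNullity_add_le_length_add_one hd hT
  have ha : (⌈(k : ℚ) / r₂⌉ - 1) * ((δ₂ : ℤ) - 1) ≤ a * (δ₂ - 1 : ℕ) :=
    ceil_div_sub_one_mul_le hkpos hdim₂ (by omega)
  have hb : (⌈(k : ℚ) / r₁⌉ - 1) * ((δ₁ : ℤ) - δ₂) ≤ b * (δ₁ - δ₂ : ℕ) :=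
    ceil_div_sub_one_mul_le hkpos hdim₁ (by omega)
  have htotal : (k : ℤ) + a * (δ₂ - 1 : ℕ) + b * (δ₁ - δ₂ : ℕ) + d ≤ n + 1 := by
    exact_mod_cast (Nat.add_le_add_right hgain d).trans hlength
  linarith only [ha, hb, htotal]

end

/-- Upper bound on the minimum distance of codes with two-level hierarchical
locality (Theorem 1). -/
theorem minDist_le_of_hierLocality2 (k d r₁ δ₁ r₂ δ₂ : ℕ)
    (C : Submodule F (Fin n → F))
    (hk : Module.finrank F C = k) (hkpos : 0 < k)
    (hr₂ : 0 < r₂) (hr : r₂ ≤ r₁) (hrk : r₁ ≤ k)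
    (hδ₂ : 2 ≤ δ₂) (hδ : δ₂ ≤ δ₁)
    (hd : IsMinDist F n C d) (hloc : HasHierLocality2 F n C r₁ δ₁ r₂ δ₂) :
    (d : ℤ) ≤ (n : ℤ) - k + 1 - (⌈(k : ℚ) / r₂⌉ - 1) * ((δ₂ : ℤ) - 1)
      - (⌈(k : ℚ) / r₁⌉ - 1) * ((δ₁ : ℤ) - (δ₂ : ℤ)) :=
  minDist_le_of_hierLocality2_general hk (by omega) hd hloc
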